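/- arXiv:math/0504083 — 3 statements merged into one kernel-verified Lean document; each statement's English description precedes it below -/
import Mathlib

section
/- Let n ≥ 2 and let R be a commutative ring in which the images of 3 and of 1, 2, …, 2n−2 are all units. Let A be the 2n×n matrix over R with A_{i,j} = (i−1)^{j−1} for i ≤ 2n−1 (0^0 = 1), last row (0,…,0,1); write A = (P; Q) with P the top n rows and Q the bottom n rows, and set B = (2P; −2Q). Then (A B) ∈ GL_{2n}(R) and every n×n minor of each of A, B, A+B, A−B is a unit of R (i.e. (A B) is an n-multimagic generator matrix). -/
/-!
The matrix `A` is a projective Vandermonde matrix whose rows are the `2n` points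
`(0 : 1), …, (2n-2 : 1), (1 : 0)` of the projective line. A maximal minor of `A` is therefore the
product of the pairwise `2 × 2` determinants of the chosen points, and each factor is either a
difference `b - a` with `0 ≤ a < b ≤ 2n-2` or `1`, hence a unit (`minorsUnit_vandermondeBlock`).

The matrices `B`, `A + B`, `A - B` arise from `A` by rescaling its rows by `±2`, by `3` or `-1`,
and by `-1` or `3` respectively, which changes minors only by unit factors (`MinorsUnit.smul_rows`).

Finally `(A B) = (P 2P; Q -2Q) = (P 0; 0 Q) (1 2; 1 -2)`, where `det P` and `det Q` are minors of
`A` and the last factor has determinant `(-4)ⁿ` (`isUnit_det_fromCols_doubleFlip`).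
-/


/-- All `n × n` minors (choices of `n` rows) of an `m × n` matrix are units. -/
def MinorsUnit {R : Type*} [CommRing R] {m n : ℕ} (A : Matrix (Fin m) (Fin n) R) : Prop :=
  ∀ r : Fin n → Fin m, StrictMono r → IsUnit (A.submatrix r id).det

/-- The `(2n) × (2n)` matrix `(A B)` obtained by placing `A` and `B` side by side. -/
def fromCols {R : Type*} {n : ℕ} (A B : Matrix (Fin (2 * n)) (Fin n) R) :
    Matrix (Fin (2 * n)) (Fin (2 * n)) R :=
  fun i j =>
    if h : (j : ℕ) < n then A i ⟨j, h⟩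
    else B i ⟨(j : ℕ) - n, by have := j.isLt; omega⟩

/-- Given a `(2n) × n` matrix `A = (P; Q)` (with `P` the top `n` rows and `Q` the bottom
`n` rows), this is the matrix `B = (2P; −2Q)`. -/
def doubleFlip {R : Type*} [CommRing R] {n : ℕ} (A : Matrix (Fin (2 * n)) (Fin n) R) :
    Matrix (Fin (2 * n)) (Fin n) R :=
  fun i j => if (i : ℕ) < n then 2 * A i j else -2 * A i j

/-- The `(2n) × n` matrix with (1-based) entries `A_{i,j} = (i−1)^{j−1}` for
`i = 1, …, 2n−1` (with `0^0 = 1`) and last row `(0, …, 0, 1)`, viewed over `R`. -/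
def vandermondeBlock (R : Type*) [CommRing R] (n : ℕ) :
    Matrix (Fin (2 * n)) (Fin n) R :=
  fun i j =>
    if (i : ℕ) < 2 * n - 1 then (((i : ℕ) ^ (j : ℕ) : ℕ) : R)
    else if (j : ℕ) = n - 1 then 1 else 0

/-- Rescaling the rows of a matrix by units preserves the property that all maximal minors are
units. -/
theorem MinorsUnit.smul_rows {R : Type*} [CommRing R] {m n : ℕ}
    {A M : Matrix (Fin m) (Fin n) R} (hA : MinorsUnit A) (d : Fin m → R)
    (hd : ∀ i, IsUnit (d i)) (hM : ∀ i j, M i j = d i * A i j) : MinorsUnit M := by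
  intro r hr
  have h : M.submatrix r id = Matrix.of fun i j => d (r i) * A.submatrix r id i j := by
    ext i j
    simp [hM]
  rw [h, Matrix.det_mul_column]
  exact (IsUnit.prod_univ_iff.mpr fun i => hd (r i)).mul (hA r hr)

theorem minorsUnit_vandermondeBlock (R : Type*) [CommRing R] (n : ℕ)
    (hu : ∀ k : ℕ, 1 ≤ k → k ≤ 2 * n - 2 → IsUnit ((k : R))) :
    MinorsUnit (vandermondeBlock R n) := by
  intro r hr
  -- Homogeneous coordinates `(v : w)` of the points; the last row is the point at infinity.
  let v : Fin (2 * n) → R := fun i => if (i : ℕ) < 2 * n - 1 then ((i : ℕ) : R) else 1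
  let w : Fin (2 * n) → R := fun i => if (i : ℕ) < 2 * n - 1 then 1 else 0
  have h : (vandermondeBlock R n).submatrix r id =
      Matrix.projVandermonde (v ∘ r) (w ∘ r) := by
    ext i j
    simp only [Matrix.submatrix_apply, id, vandermondeBlock, Matrix.projVandermonde_apply,
      Function.comp, v, w]
    split_ifs with h1 h2
    · simp
    · have : (j.rev : ℕ) = 0 := by rw [Fin.val_rev]; omega
      simp [this, -Fin.val_rev]
    · have : (j.rev : ℕ) ≠ 0 := by rw [Fin.val_rev]; omega
      simp [this, -Fin.val_rev]
  rw [h, Matrix.det_projVandermonde]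
  refine IsUnit.prod_univ_iff.mpr fun i => IsUnit.prod_iff.mpr fun j hj => ?_
  have hij : (r i : ℕ) < r j := hr (Finset.mem_Ioi.mp hj)
  have hj2 := (r j).isLt
  have hi : (r i : ℕ) < 2 * n - 1 := by omega
  by_cases hjn : (r j : ℕ) < 2 * n - 1
  · have := hu ((r j : ℕ) - r i) (by omega) (by omega)
    rw [Nat.cast_sub hij.le] at this
    simpa [v, w, hi, hjn] using this
  · simp [v, w, hi, hjn]

theorem isUnit_det_fromCols_doubleFlip {R : Type*} [CommRing R] {n : ℕ}
    {A : Matrix (Fin (2 * n)) (Fin n) R} (hA : MinorsUnit A) (h2 : IsUnit (2 : R)) :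
    IsUnit (fromCols A (doubleFlip A)).det := by
  let e : Fin n ⊕ Fin n ≃ Fin (2 * n) := finSumFinEquiv.trans (finCongr (two_mul n).symm)
  have hl (i : Fin n) : (e (Sum.inl i) : ℕ) = i := by simp [e]
  have hr (i : Fin n) : (e (Sum.inr i) : ℕ) = n + i := by simp [e, add_comm]
  have hP := hA (e ∘ Sum.inl) fun i j hij => by
    rw [Fin.lt_def] at hij ⊢
    simpa only [Function.comp, hl] using hij
  have hQ := hA (e ∘ Sum.inr) fun i j hij => by
    rw [Fin.lt_def] at hij ⊢
    simp only [Function.comp, hr]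
    omega
  set P := A.submatrix (e ∘ Sum.inl) id
  set Q := A.submatrix (e ∘ Sum.inr) id
  have h : (fromCols A (doubleFlip A)).submatrix e e =
      Matrix.fromBlocks P 0 0 Q *
        Matrix.fromBlocks 1 ((2 : R) • (1 : Matrix (Fin n) (Fin n) R)) 1 ((-2 : R) • 1) := by
    rw [Matrix.fromBlocks_multiply]
    ext (i | i) (j | j) <;>
      simp [fromCols, doubleFlip, hl, hr, P, Q]
  rw [← Matrix.det_submatrix_equiv_self e, h, Matrix.det_mul, Matrix.det_fromBlocks_zero₂₁,
    Matrix.det_fromBlocks_one₁₁, one_mul, ← sub_smul, Matrix.det_smul, Matrix.det_one, mul_one]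
  refine (hP.mul hQ).mul (IsUnit.pow _ ?_)
  have h4 : (-2 - 2 : R) = -(2 * 2) := by ring
  rw [h4]
  exact (h2.mul h2).neg

/-- Let `n ≥ 2` and let `R` be a commutative ring in which the images of `3` and of
`1, 2, …, 2n−2` are all units.  With `A` the matrix of Lemma 5.2 and `B = (2P; −2Q)`
(where `A = (P; Q)`), the matrix `(A B)` is an `n`-multimagic generator matrix:
it is invertible and all `n × n` minors of `A`, `B`, `A + B`, `A − B` are units. -/
theorem vandermonde_generator_matrix
    (R : Type*) [CommRing R] (n : ℕ) (hn : 2 ≤ n)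
    (h3 : IsUnit ((3 : R)))
    (hu : ∀ k : ℕ, 1 ≤ k → k ≤ 2 * n - 2 → IsUnit ((k : R))) :
    IsUnit (fromCols (vandermondeBlock R n) (doubleFlip (vandermondeBlock R n))).det ∧
    MinorsUnit (vandermondeBlock R n) ∧
    MinorsUnit (doubleFlip (vandermondeBlock R n)) ∧
    MinorsUnit (vandermondeBlock R n + doubleFlip (vandermondeBlock R n)) ∧
    MinorsUnit (vandermondeBlock R n - doubleFlip (vandermondeBlock R n)) := by
  have h2 : IsUnit (2 : R) := by simpa using hu 2 (by omega) (by omega)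
  have hA := minorsUnit_vandermondeBlock R n hu
  refine ⟨isUnit_det_fromCols_doubleFlip hA h2, hA,
    hA.smul_rows (fun i => if (i : ℕ) < n then 2 else -2) ?_ ?_,
    hA.smul_rows (fun i => if (i : ℕ) < n then 3 else -1) ?_ ?_,
    hA.smul_rows (fun i => if (i : ℕ) < n then -1 else 3) ?_ ?_⟩
  · intro i
    split_ifs
    exacts [h2, h2.neg]
  · intro i j
    simp only [doubleFlip]
    split_ifs <;> ring
  · intro i
    split_ifs
    exacts [h3, isUnit_one.neg]
  · intro i j
    simp only [doubleFlip, Matrix.add_apply]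
    split_ifs <;> ring
  · intro i
    split_ifs
    exacts [isUnit_one.neg, h3]
  · intro i j
    simp only [doubleFlip, Matrix.sub_apply]
    split_ifs <;> ring
end

section
/- Let n ≥ 3 and let q be a prime with q ≥ 2n−1; set R = 𝔽_q. Let N : R → {0,1,…,q−1} be the bijection N(i mod q) = i for 0 ≤ i ≤ q−1, and for each m ≥ 1 define N_m : R^m → {1,…,q^m} by N_m(a_1,…,a_m) = 1 + Σ_{j=1}^m q^{j−1} N(a_j). Let A be the 2n×n matrix over 𝔽_q with A_{i,j} = (i−1)^{j−1} for i ≤ 2n−1 (0^0 = 1) and last row (0,…,0,1); write A = (P; Q) with P the top n rows and Q the bottom n rows, and set B = (2P; −2Q), X = (A B). Then for every t ∈ R^{2n}, the q^n × q^n matrix M defined by M_{N_n(a), N_n(b)} = N_{2n}(X·(a,b) + t) for a, b ∈ R^n is a normal n-multimagic square. -/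
/-!
Write `w a = A a` for the map `R^n → R^{2n}` given by `A`, and let `s j = 2` for `j < n`,
`s j = -2` for `j ≥ n`. Then `(X (a, b))_j = (w a)_j + s j * (w b)_j`
(`fromCols_mulVec_concat`).

The matrix `A` generates an extended Reed–Solomon code: the rows other than the last evaluate
the polynomial `∑ v_j X^j` at distinct points of `𝔽_q` (this is where `q ≥ 2n - 1` enters), and
the last row reads off its leading coefficient. Counting roots, any `n` rows of `A` are linearly
independent (`vandermondeBlock_mds`). Hence, for nonzero `c j` and any `t'`, each `n` coordinates
of `v ↦ c j * (w v)_j + t' j` are jointly uniformly distributed over `R^n` (`isUniform_affine`).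

A power `(1 + ∑_j q^j x_j)^d` with `d ≤ n` is a combination of monomials that involve at most `n`
of the `x_j` each, so its sum over `v` is the same for all families of this kind (`sum_pow_eq`).
A row, a column, the diagonal and the antidiagonal are such families with `c = s`, `c = 1`,
`c = 1 + s` and `c = 1 - s`; for the antidiagonal, reversing an index in `{1, …, q^n}` is
`a ↦ -1 - a` on `R^n` (`rev_eq`). Since `q ≥ 5`, the values `±2, 1, 3, -1` are nonzero.

Normality follows from uniqueness of base-`q` digits and injectivity of `X`: a kernel vector
`(a, b)` has `a + 2b` killed by the top `n` rows of `A` and `a - 2b` by the bottom `n` rows, so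
both vanish, and `4 ≠ 0` in `𝔽_q`.
-/

/-- An `m × m` matrix of natural numbers is a magic square if all row sums,
all column sums, the main diagonal sum and the antidiagonal sum are equal. -/
def IsMagicSquare {m : ℕ} (M : Fin m → Fin m → ℕ) : Prop :=
  ∃ S : ℕ,
    (∀ i, (∑ j, M i j) = S) ∧
    (∀ j, (∑ i, M i j) = S) ∧
    (∑ i, M i i) = S ∧
    (∑ i, M i i.rev) = S

/-- `M` is `n`-multimagic if the entrywise `d`-th power of `M` is magic for `d = 1, …, n`. -/
def IsMultimagic {m : ℕ} (n : ℕ) (M : Fin m → Fin m → ℕ) : Prop :=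
  ∀ d, 1 ≤ d → d ≤ n → IsMagicSquare (fun i j => M i j ^ d)

/-- `M` is normal if its entries are exactly `1, 2, …, m²`, each occurring once. -/
def IsNormal {m : ℕ} (M : Fin m → Fin m → ℕ) : Prop :=
  Function.Injective (fun p : Fin m × Fin m => M p.1 p.2) ∧
  Set.range (fun p : Fin m × Fin m => M p.1 p.2) = Set.Icc 1 (m ^ 2)

/-- The concatenation of two vectors of length `n` into a vector of length `2n`. -/
def concat {R : Type*} {n : ℕ} (a b : Fin n → R) : Fin (2 * n) → R :=
  fun j =>
    if h : (j : ℕ) < n then a ⟨j, h⟩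
    else b ⟨(j : ℕ) - n, by have := j.isLt; omega⟩

/-! ### Power sums over uniformly distributed families -/

/-- A family of `K`-valued functions `f · j` on `V` such that any `n` of them jointly
identify `V` with `K^n`, i.e. are jointly uniformly distributed (an orthogonal array of
strength `n` and index one). -/
def IsUniform {V ι K : Type*} (n : ℕ) (f : V → ι → K) : Prop :=
  ∀ S : Finset ι, S.card = n → Function.Bijective (fun v (j : S) => f v j)

/-- Sums of monomials in at most `n` coordinates do not depend on the uniform family. -/
lemma sum_prod_eq {V ι K : Type*} [Fintype V] [Fintype ι] {n k : ℕ}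
    (hι : n ≤ Fintype.card ι) (hk : k ≤ n) {f f' : V → ι → K}
    (hf : IsUniform n f) (hf' : IsUniform n f') (p : Fin k → ι) (g : ι → K → ℕ) :
    ∑ v, ∏ i, g (p i) (f v (p i)) = ∑ v, ∏ i, g (p i) (f' v (p i)) := by
  classical
  obtain ⟨S, hS, -, hcard⟩ := Finset.exists_subsuperset_card_eq
    (s := Finset.univ.image p) (t := Finset.univ) (n := n) (Finset.subset_univ _)
    (Finset.card_image_le.trans (by simpa using hk)) (by simpa using hι)
  have hp : ∀ i, p i ∈ S := fun i => hS (Finset.mem_image_of_mem p (Finset.mem_univ i))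
  let e := Equiv.ofBijective _ (hf S hcard)
  let e' := Equiv.ofBijective _ (hf' S hcard)
  -- `e.trans e'.symm` matches the points of `V` at which the coordinates in `S` agree.
  refine Fintype.sum_equiv (e.trans e'.symm) _ _ fun v => ?_
  have h : e' ((e.trans e'.symm) v) = e v := by simp
  refine Finset.prod_congr rfl fun i _ => ?_
  have := congrFun h ⟨p i, hp i⟩
  simp only [e, e', Equiv.ofBijective_apply] at this
  rw [← this]

/-- The `d`-th power sums, `d ≤ n`, of the numbers with base-`q` digits `f v` do not depend on
the uniform family `f`. -/
lemma sum_pow_eq {V : Type*} [Fintype V] {m n q d : ℕ}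
    (hm : n ≤ m) (hd : d ≤ n) {f f' : V → Fin m → ZMod q}
    (hf : IsUniform n f) (hf' : IsUniform n f') :
    ∑ v, (1 + ∑ j : Fin m, q ^ (j : ℕ) * (f v j).val) ^ d
      = ∑ v, (1 + ∑ j : Fin m, q ^ (j : ℕ) * (f' v j).val) ^ d := by
  have key : ∀ k ≤ n, ∑ v, (∑ j : Fin m, q ^ (j : ℕ) * (f v j).val) ^ k
      = ∑ v, (∑ j : Fin m, q ^ (j : ℕ) * (f' v j).val) ^ k := by
    intro k hk
    simp only [Fintype.sum_pow]
    rw [Finset.sum_comm, Finset.sum_comm (s := Finset.univ (α := V))]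
    refine Finset.sum_congr rfl fun p _ => ?_
    exact sum_prod_eq (by simpa using hm) hk hf hf' p (fun j x => q ^ (j : ℕ) * x.val)
  simp only [add_comm 1, add_pow, one_pow, mul_one]
  rw [Finset.sum_comm, Finset.sum_comm (s := Finset.univ (α := V))]
  refine Finset.sum_congr rfl fun k hk => ?_
  rw [← Finset.sum_mul, ← Finset.sum_mul, key k (by have := Finset.mem_range.1 hk; omega)]

/-! ### Independence of the rows of `A` -/

/-- Any `n` rows of the matrix `A` are linearly independent: `A` generates an MDS code. -/
lemma vandermondeBlock_mds {n q : ℕ} [Fact q.Prime] (hn : 1 ≤ n) (hqn : 2 * n - 1 ≤ q)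
    (S : Finset (Fin (2 * n))) (hS : S.card = n) (v : Fin n → ZMod q)
    (hv : ∀ j ∈ S, (vandermondeBlock (ZMod q) n).mulVec v j = 0) : v = 0 := by
  classical
  open Polynomial in
  let p : (ZMod q)[X] := ∑ j : Fin n, C (v j) * X ^ (j : ℕ)
  have hcoeff : ∀ j : Fin n, p.coeff j = v j := by
    intro j
    simp only [p, Polynomial.finsetSum_coeff, Polynomial.coeff_C_mul_X_pow]
    rw [Finset.sum_eq_single j]
    · simp
    · intro b _ hb
      rw [if_neg]
      intro h
      exact hb (Fin.ext h.symm)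
    · simp
  let l : Fin (2 * n) := ⟨2 * n - 1, by omega⟩
  have heval : ∀ i ∈ S.erase l, p.eval ((i : ℕ) : ZMod q) = 0 := by
    intro i hi
    obtain ⟨hil, hiS⟩ := Finset.mem_erase.1 hi
    have hlt : (i : ℕ) < 2 * n - 1 := by
      have := i.isLt
      have : (i : ℕ) ≠ 2 * n - 1 := fun h => hil (Fin.ext h)
      omega
    rw [← hv i hiS]
    simp only [p, Polynomial.eval_finsetSum, Polynomial.eval_mul, Polynomial.eval_C,
      Polynomial.eval_pow, Polynomial.eval_X, Matrix.mulVec, dotProduct, vandermondeBlock,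
      if_pos hlt, Nat.cast_pow]
    exact Finset.sum_congr rfl fun j _ => mul_comm _ _
  have hinj : Set.InjOn (fun i : Fin (2 * n) => ((i : ℕ) : ZMod q)) (S.erase l) := by
    intro i hi j hj hij
    have hlt : ∀ i ∈ S.erase l, (i : ℕ) < q := by
      intro i hi
      have := i.isLt
      have : (i : ℕ) ≠ 2 * n - 1 := fun h => (Finset.mem_erase.1 hi).1 (Fin.ext h)
      omega
    have := congrArg ZMod.val hij
    simp only [ZMod.val_cast_of_lt (hlt i hi), ZMod.val_cast_of_lt (hlt j hj)] at this
    exact Fin.ext this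
  have hdeg : p.degree < (S.erase l).card := by
    rw [Polynomial.degree_lt_iff_coeff_zero]
    intro k hk
    have hlarge : n ≤ k → p.coeff k = 0 := by
      intro hnk
      simp only [p, Polynomial.finsetSum_coeff, Polynomial.coeff_C_mul_X_pow]
      refine Finset.sum_eq_zero fun j _ => ?_
      rw [if_neg]
      have := j.isLt
      omega
    by_cases hl : l ∈ S
    · rw [Finset.card_erase_of_mem hl, hS] at hk
      by_cases hnk : n ≤ k
      · exact hlarge hnk
      · obtain rfl : k = n - 1 := by omega
        -- The last row of `A` kills the coefficient of degree `n - 1`.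
        have h0 := hv l hl
        have h1 : (vandermondeBlock (ZMod q) n).mulVec v l = v ⟨n - 1, by omega⟩ := by
          simp only [Matrix.mulVec, dotProduct, vandermondeBlock, l, lt_irrefl, if_false]
          rw [Finset.sum_eq_single ⟨n - 1, by omega⟩]
          · simp
          · intro b _ hb
            rw [if_neg (fun h => hb (Fin.ext h)), zero_mul]
          · simp
        rw [h1] at h0
        exact (hcoeff ⟨n - 1, by omega⟩).trans h0
    · rw [Finset.erase_eq_of_notMem hl, hS] at hk
      exact hlarge hk
  have hp : p = 0 :=
    Polynomial.eq_zero_of_degree_lt_of_eval_index_eq_zero _ hinj hdeg heval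
  funext j
  rw [← hcoeff j, hp]
  simp

lemma isUniform_affine {n q : ℕ} [Fact q.Prime] (hn : 1 ≤ n) (hqn : 2 * n - 1 ≤ q)
    (c t : Fin (2 * n) → ZMod q) (hc : ∀ j, c j ≠ 0) :
    IsUniform n (fun v j => c j * (vandermondeBlock (ZMod q) n).mulVec v j + t j) := by
  intro S hS
  rw [Fintype.bijective_iff_injective_and_card]
  refine ⟨fun v v' h => ?_, by simp [hS]⟩
  rw [← sub_eq_zero]
  refine vandermondeBlock_mds hn hqn S hS _ fun j hj => ?_
  have := congrFun h ⟨j, hj⟩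
  simp only [add_left_inj, mul_right_inj' (hc j)] at this
  rw [Matrix.mulVec_sub, Pi.sub_apply, this, sub_self]

/-! ### The square in terms of `A` -/

/-- The factor `2` on the top half and `-2` on the bottom half, by which the rows of `B` are
multiples of those of `A`. -/
def flipSign (R : Type*) [CommRing R] (n : ℕ) (j : Fin (2 * n)) : R :=
  if (j : ℕ) < n then 2 else -2

lemma fromCols_mulVec_concat {R : Type*} [CommRing R] {n : ℕ}
    (A : Matrix (Fin (2 * n)) (Fin n) R) (a b : Fin n → R) (i : Fin (2 * n)) :
    (fromCols A (doubleFlip A)).mulVec (concat a b) i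
      = A.mulVec a i + flipSign R n i * A.mulVec b i := by
  simp only [Matrix.mulVec, dotProduct]
  rw [← Equiv.sum_comp (finCongr (two_mul n).symm), Fin.sum_univ_add, Finset.mul_sum]
  congr 1
  · refine Finset.sum_congr rfl fun j _ => ?_
    simp [fromCols, concat]
  · refine Finset.sum_congr rfl fun j _ => ?_
    simp only [fromCols, concat, doubleFlip, flipSign, finCongr_apply, Fin.val_cast,
      Fin.val_natAdd, add_lt_iff_neg_left, not_lt_zero, dite_false, add_tsub_cancel_left, Fin.eta]
    split_ifs <;> ring

/-- Base-`q` numbers with `m` digits are below `q^m` and determine their digits. -/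
lemma digits_lt_and_inj {m q : ℕ} [NeZero q] :
    (∀ u : Fin m → ZMod q, ∑ j : Fin m, q ^ (j : ℕ) * (u j).val < q ^ m) ∧
    Function.Injective (fun u : Fin m → ZMod q => ∑ j : Fin m, q ^ (j : ℕ) * (u j).val) := by
  let F : (Fin m → ZMod q) → Fin m → Fin q := fun u j => ⟨(u j).val, ZMod.val_lt _⟩
  have hF : ∀ u : Fin m → ZMod q,
      ∑ j : Fin m, q ^ (j : ℕ) * (u j).val = (finFunctionFinEquiv (F u) : ℕ) := by
    intro u
    simp [F, mul_comm]
  refine ⟨fun u => by rw [hF]; exact Fin.isLt _, fun u u' h => ?_⟩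
  simp only [hF] at h
  have h2 := finFunctionFinEquiv.injective (Fin.ext h)
  funext j
  exact ZMod.val_injective q (congrArg Fin.val (congrFun h2 j))

/-- Reversing an index of `{0, …, q^n - 1}` replaces each digit `x` by `q - 1 - x`. -/
lemma rev_eq {n q : ℕ} [NeZero q] (Nn : (Fin n → ZMod q) ≃ Fin (q ^ n))
    (hNn : ∀ a : Fin n → ZMod q, (Nn a : ℕ) = ∑ j : Fin n, q ^ (j : ℕ) * (a j).val)
    (a : Fin n → ZMod q) : (Nn a).rev = Nn (-1 - a) := by
  have hq : 1 ≤ q := Nat.pos_of_neZero q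
  have hval : ∀ x : ZMod q, x.val + (-1 - x).val = q - 1 := by
    intro x
    have hx := ZMod.val_lt x
    have h : (-1 - x : ZMod q) = ((q - 1 - x.val : ℕ) : ZMod q) := by
      rw [Nat.cast_sub (by omega), Nat.cast_sub hq]
      simp
    rw [h, ZMod.val_cast_of_lt (by omega)]
    omega
  have hsum : (Nn a : ℕ) + (Nn (-1 - a) : ℕ) = q ^ n - 1 := by
    rw [hNn, hNn, ← Finset.sum_add_distrib]
    simp only [← mul_add, Pi.sub_apply, Pi.neg_apply, Pi.one_apply, hval]
    rw [← Finset.sum_mul, Fin.sum_univ_eq_sum_range (fun j => q ^ j) n]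
    have := geom_sum_mul_add (q - 1) n
    rw [Nat.sub_add_cancel hq] at this
    omega
  apply Fin.ext
  rw [Fin.val_rev]
  have := (Nn a).isLt
  omega

/-- **Explicit formula for `n`-multimagic squares.**  Let `n ≥ 3`, `q ≥ 2n − 1` a prime
and `R = 𝔽_q = ZMod q`.  Take the standard bijection `N : R → {0, …, q−1}`,
`N (i mod q) = i` (realised by `ZMod.val`), and `N_m (a) = 1 + Σ_j q^(j−1) N(a_j)`.
Let `A` be the matrix of Lemma 5.2 over `𝔽_q`, `B = (2P; −2Q)` where `A = (P; Q)`, and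
`X = (A B)`.  Then for every `t ∈ R^{2n}` the `q^n × q^n` matrix `M` with
`M_{N_n(a), N_n(b)} = N_{2n}(X·(a,b) + t)` is a normal `n`-multimagic square.
(The bijection `N_n` is encoded by an equivalence `Nn : R^n ≃ Fin (q^n)` whose
`0`-based value satisfies `(Nn a : ℕ) = Σ_j q^(j−1) N(a_j)`.) -/
theorem explicit_multimagic_square
    (n q : ℕ) (hn : 3 ≤ n) (hq : q.Prime) (hqn : 2 * n - 1 ≤ q)
    (Nn : (Fin n → ZMod q) ≃ Fin (q ^ n))
    (hNn : ∀ a : Fin n → ZMod q, (Nn a : ℕ) = ∑ j : Fin n, q ^ (j : ℕ) * (a j).val)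
    (t : Fin (2 * n) → ZMod q)
    (M : Fin (q ^ n) → Fin (q ^ n) → ℕ)
    (hM : ∀ a b : Fin n → ZMod q,
      M (Nn a) (Nn b)
        = 1 + ∑ j : Fin (2 * n),
            q ^ (j : ℕ) *
              (((fromCols (vandermondeBlock (ZMod q) n)
                  (doubleFlip (vandermondeBlock (ZMod q) n))).mulVec (concat a b) + t) j).val) :
    IsNormal M ∧ IsMultimagic n M := by
  have : Fact q.Prime := ⟨hq⟩
  set w := (vandermondeBlock (ZMod q) n).mulVec with hw
  set s := flipSign (ZMod q) n with hs
  have hM' : ∀ a b, M (Nn a) (Nn b)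
      = 1 + ∑ j : Fin (2 * n), q ^ (j : ℕ) * (w a j + s j * w b j + t j).val := by
    intro a b
    rw [hM]
    simp only [Pi.add_apply, fromCols_mulVec_concat, hw, hs]
  have hq5 : 5 ≤ q := by omega
  have hcast : ∀ k : ℕ, 0 < k → k < q → ((k : ℕ) : ZMod q) ≠ 0 := by
    intro k hk hkq h
    exact absurd (Nat.le_of_dvd hk ((ZMod.natCast_eq_zero_iff k q).1 h)) (by omega)
  have h2 : (2 : ZMod q) ≠ 0 := by exact_mod_cast hcast 2 (by omega) (by omega)
  have h3 : (3 : ZMod q) ≠ 0 := by exact_mod_cast hcast 3 (by omega) (by omega)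
  have hwsub : ∀ a b j, w (a - b) j = w a j - w b j := by
    intro a b j
    simp [hw, Matrix.mulVec_sub]
  have hwadd : ∀ a b j, w (a + b) j = w a j + w b j := by
    intro a b j
    simp [hw, Matrix.mulVec_add]
  have hsval : ∀ j, s j = 2 ∨ s j = -2 := by
    intro j
    simp only [hs, flipSign]
    split_ifs <;> simp
  have hs0 : ∀ j, s j ≠ 0 := by
    intro j
    rcases hsval j with h | h <;> rw [h]
    · exact h2
    · exact neg_ne_zero.2 h2
  have hs1 : ∀ j, 1 + s j ≠ 0 := by
    intro j
    rcases hsval j with h | h <;> rw [h] <;> norm_num [h3]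
  have hs2 : ∀ j, 1 - s j ≠ 0 := by
    intro j
    rcases hsval j with h | h <;> rw [h] <;> norm_num [h3]
  have hunif := fun c t' hc =>
    isUniform_affine (n := n) (q := q) (by omega) hqn c t' hc
  rw [← hw] at hunif
  obtain ⟨hlt, hinj⟩ := digits_lt_and_inj (m := 2 * n) (q := q)
  refine ⟨?_, ?_⟩
  · have hMinj : Function.Injective
        (fun p : Fin (q ^ n) × Fin (q ^ n) => M p.1 p.2) := by
      rintro ⟨x, y⟩ ⟨x', y'⟩ h
      obtain ⟨a, rfl⟩ := Nn.surjective x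
      obtain ⟨b, rfl⟩ := Nn.surjective y
      obtain ⟨a', rfl⟩ := Nn.surjective x'
      obtain ⟨b', rfl⟩ := Nn.surjective y'
      simp only [hM'] at h
      have hu : ∀ j, w (a - a') j + s j * w (b - b') j = 0 := by
        intro j
        have := congrFun (@hinj (fun j => w a j + s j * w b j + t j)
          (fun j => w a' j + s j * w b' j + t j) (Nat.add_left_cancel h)) j
        rw [hwsub, hwsub]
        linear_combination this
      -- The top half of `A` determines `a + 2b`, and the bottom half determines `a - 2b`.
      have hp : (a - a') + ((b - b') + (b - b')) = 0 := by
        refine vandermondeBlock_mds (by omega) hqn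
          (Finset.univ.filter fun j : Fin (2 * n) => (j : ℕ) < n) ?_ _ fun j hj => ?_
        · rw [Fin.card_filter_val_lt]; omega
        · have hj' : (j : ℕ) < n := (Finset.mem_filter.1 hj).2
          have hsj : s j = 2 := by simp [hs, flipSign, hj']
          have := hu j
          rw [hsj] at this
          change w _ j = 0
          rw [hwadd, hwadd]
          linear_combination this
      have hm : (a - a') - ((b - b') + (b - b')) = 0 := by
        refine vandermondeBlock_mds (by omega) hqn
          (Finset.univ.filter fun j : Fin (2 * n) => ¬ (j : ℕ) < n) ?_ _ fun j hj => ?_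
        · have := Finset.card_filter_add_card_filter_not (s := (Finset.univ : Finset (Fin (2 * n))))
            (fun j : Fin (2 * n) => (j : ℕ) < n)
          rw [Fin.card_filter_val_lt, Finset.card_univ, Fintype.card_fin] at this
          omega
        · have hj' : ¬ (j : ℕ) < n := (Finset.mem_filter.1 hj).2
          have hsj : s j = -2 := by simp [hs, flipSign, hj']
          have := hu j
          rw [hsj] at this
          change w _ j = 0
          rw [hwsub, hwadd]
          linear_combination this
      have hab : ∀ j, a j = a' j ∧ b j = b' j := by
        intro j
        have e1 := congrFun hp j
        have e2 := congrFun hm j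
        simp only [Pi.add_apply, Pi.sub_apply, Pi.zero_apply] at e1 e2
        have ea : 2 * (a j - a' j) = 0 := by linear_combination e1 + e2
        have eb : 2 * (2 * (b j - b' j)) = 0 := by linear_combination e1 - e2
        simp only [mul_eq_zero, h2, false_or, sub_eq_zero] at ea eb
        exact ⟨ea, eb⟩
      rw [funext fun j => (hab j).1, funext fun j => (hab j).2]
    refine ⟨hMinj, ?_⟩
    -- An injection of a set of `q^(2n)` elements into `{1, …, q^(2n)}` is onto.
    have hfin : Finset.univ.image (fun p : Fin (q ^ n) × Fin (q ^ n) => M p.1 p.2)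
        = Finset.Icc 1 ((q ^ n) ^ 2) := by
      refine Finset.eq_of_subset_of_card_le ?_ ?_
      · intro z hz
        obtain ⟨⟨x, y⟩, -, rfl⟩ := Finset.mem_image.1 hz
        obtain ⟨a, rfl⟩ := Nn.surjective x
        obtain ⟨b, rfl⟩ := Nn.surjective y
        have := hlt (fun j => w a j + s j * w b j + t j)
        have hpow : q ^ (2 * n) = (q ^ n) ^ 2 := by rw [mul_comm 2 n, pow_mul]
        simp only [hM', Finset.mem_Icc]
        omega
      · rw [Finset.card_image_of_injective _ hMinj]
        simp [sq]
    have := congrArg (fun F : Finset ℕ => (F : Set ℕ)) hfin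
    simpa using this
  · intro d _ hd
    -- The common value is the sum for the uniform family `w`.
    have key : ∀ (c t' : Fin (2 * n) → ZMod q) (f : (Fin n → ZMod q) → Fin (2 * n) → ZMod q),
        (∀ j, c j ≠ 0) → (∀ v j, f v j = c j * w v j + t' j) →
        ∑ v, (1 + ∑ j : Fin (2 * n), q ^ (j : ℕ) * (f v j).val) ^ d
          = ∑ v, (1 + ∑ j : Fin (2 * n), q ^ (j : ℕ) * (1 * w v j + 0).val) ^ d := by
      intro c t' f hc hf
      obtain rfl : f = fun v j => c j * w v j + t' j := funext₂ hf
      exact sum_pow_eq (by omega) hd (hunif c t' hc)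
        (hunif (fun _ => 1) (fun _ => 0) fun _ => one_ne_zero)
    refine ⟨∑ v, (1 + ∑ j : Fin (2 * n), q ^ (j : ℕ) * (1 * w v j + 0).val) ^ d,
      fun x => ?_, fun y => ?_, ?_, ?_⟩
    rotate_left 2
    · rw [← Equiv.sum_comp Nn]
      simp only [hM']
      exact key (fun j => 1 + s j) t _ hs1 fun v j => by ring
    · rw [← Equiv.sum_comp Nn]
      simp only [rev_eq Nn hNn, hM']
      exact key (fun j => 1 - s j) (fun j => s j * w (-1) j + t j) _ hs2
        fun v j => by rw [hwsub]; ring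
    · obtain ⟨a, rfl⟩ := Nn.surjective x
      rw [← Equiv.sum_comp Nn]
      simp only [hM']
      exact key s (fun j => w a j + t j) _ hs0 fun v j => by ring
    · obtain ⟨b, rfl⟩ := Nn.surjective y
      rw [← Equiv.sum_comp Nn]
      simp only [hM']
      exact key (fun _ => 1) (fun j => s j * w b j + t j) _ (fun _ => one_ne_zero)
        fun v j => by ring
end

section
/- Let R be a finite commutative ring with q elements and n ≥ 1, with bijections N_{(j)} of type c_j (j = 1,…,n) inducing N_n : R^n → {1,…,q^n}, and bijections N'_{(j)} of type c'_j (j = 1,…,3n) inducing N'_{3n} : R^{3n} → {1,…,q^{3n}}. Let A, B, C ∈ Mat_{3n,n}(R) satisfy: (A B C) ∈ GL_{3n}(R); every n×n minor of each of A, B, C is a unit; every n×n minor of each of A+B+C, −A+B+C, A−B+C, A+B−C is a unit; and every n×n minor of each of A+B, A−B, A+C, A−C, B+C, B−C is a unit. Then for every t ∈ R^{3n} the array M defined by M_{N_n(a),N_n(b),N_n(c)} = N'_{3n}((A B C)·(a,b,c) + t) is a normal perfect n-multimagic cube. -/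
/-!
Along each line of the cube (axis line, space diagonal or diagonal of a slice) the argument of
`N'` runs through `F x + v`, `x ∈ R^n`, where `v` is a fixed vector and `F` is one of the thirteen
matrices `A`, …, `A + B - C`, …, `B - C`; on a diagonal, reversing an index amounts to replacing
`a` by `c - a`, because the bijections `N` are of type `c` (`rev_induced`).

Write the entry as `1 + ∑ j, g j (y j)` with `y = F x + v`. Its `d`-th power is a sum of terms each
depending on at most `d ≤ n` coordinates of `y`. Any `n` coordinates of `F x + v` run through `R^n`
exactly once as `x` does, since the corresponding minor of `F` is a unit. So the sum over `x` of
each such term, hence of the `d`-th power, depends neither on `F` nor on `v`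
(`sum_pow_line_eq`), and all lines have the same sum.

Normality: `(a, b, c) ↦ (A B C)(a, b, c) + t` is injective, and base-`q` expansion is a bijection
onto `{0, …, q^{3n} - 1}`; surjectivity follows by counting.
-/

/-- A `q × q × q` array of natural numbers is a magic cube if all line sums in the three
axis directions and the sums along the four space diagonals are equal. -/
def IsMagicCube {m : ℕ} (M : Fin m → Fin m → Fin m → ℕ) : Prop :=
  ∃ S : ℕ,
    (∀ j k, (∑ i, M i j k) = S) ∧
    (∀ i k, (∑ j, M i j k) = S) ∧
    (∀ i j, (∑ k, M i j k) = S) ∧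
    (∑ i, M i i i) = S ∧
    (∑ i, M i i i.rev) = S ∧
    (∑ i, M i i.rev i) = S ∧
    (∑ i, M i.rev i i) = S

/-- A magic cube is perfect if moreover both diagonals of every orthogonal slice have the
magic sum. -/
def IsPerfectMagicCube {m : ℕ} (M : Fin m → Fin m → Fin m → ℕ) : Prop :=
  ∃ S : ℕ,
    (∀ j k, (∑ i, M i j k) = S) ∧
    (∀ i k, (∑ j, M i j k) = S) ∧
    (∀ i j, (∑ k, M i j k) = S) ∧
    (∑ i, M i i i) = S ∧
    (∑ i, M i i i.rev) = S ∧
    (∑ i, M i i.rev i) = S ∧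
    (∑ i, M i.rev i i) = S ∧
    (∀ i, (∑ j, M i j j) = S) ∧
    (∀ i, (∑ j, M i j j.rev) = S) ∧
    (∀ j, (∑ i, M i j i) = S) ∧
    (∀ j, (∑ i, M i j i.rev) = S) ∧
    (∀ k, (∑ i, M i i k) = S) ∧
    (∀ k, (∑ i, M i i.rev k) = S)

/-- A cube is normal if its entries are exactly `1, 2, …, m³`, each occurring once. -/
def IsNormalCube {m : ℕ} (M : Fin m → Fin m → Fin m → ℕ) : Prop :=
  Function.Injective (fun p : Fin m × Fin m × Fin m => M p.1 p.2.1 p.2.2) ∧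
  Set.range (fun p : Fin m × Fin m × Fin m => M p.1 p.2.1 p.2.2) = Set.Icc 1 (m ^ 3)

/-- `M` is an `n`-multimagic cube if the entrywise `d`-th power of `M` is a magic cube
for `d = 1, …, n`. -/
def IsMultimagicCube {m : ℕ} (n : ℕ) (M : Fin m → Fin m → Fin m → ℕ) : Prop :=
  ∀ d, 1 ≤ d → d ≤ n → IsMagicCube (fun i j k => M i j k ^ d)

/-- `M` is a perfect `n`-multimagic cube if the entrywise `d`-th power of `M` is a
perfect magic cube for `d = 1, …, n`. -/
def IsPerfectMultimagicCube {m : ℕ} (n : ℕ) (M : Fin m → Fin m → Fin m → ℕ) : Prop :=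
  ∀ d, 1 ≤ d → d ≤ n → IsPerfectMagicCube (fun i j k => M i j k ^ d)

/-- The `(3n) × (3n)` matrix `(A B C)` obtained by placing `A`, `B`, `C` side by side. -/
def fromCols3 {R : Type*} {n : ℕ} (A B C : Matrix (Fin (3 * n)) (Fin n) R) :
    Matrix (Fin (3 * n)) (Fin (3 * n)) R :=
  fun i j =>
    if h : (j : ℕ) < n then A i ⟨j, h⟩
    else if h2 : (j : ℕ) < 2 * n then B i ⟨(j : ℕ) - n, by omega⟩
    else C i ⟨(j : ℕ) - 2 * n, by have := j.isLt; omega⟩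

/-- The concatenation of three vectors of length `n` into a vector of length `3n`. -/
def concat3 {R : Type*} {n : ℕ} (a b c : Fin n → R) : Fin (3 * n) → R :=
  fun j =>
    if h : (j : ℕ) < n then a ⟨j, h⟩
    else if h2 : (j : ℕ) < 2 * n then b ⟨(j : ℕ) - n, by omega⟩
    else c ⟨(j : ℕ) - 2 * n, by have := j.isLt; omega⟩

open Finset Matrix

/-! ### Power sums along affine families -/

/-- Any `n` coordinates of `F x + v` run through `R^n` exactly once as `x` does, when the
corresponding minor of `F` is a unit. -/
lemma sum_comp_rows {R : Type*} [CommRing R] [Fintype R] {m n : ℕ}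
    (F : Matrix (Fin m) (Fin n) R) (v : Fin m → R) (r : Fin n → Fin m)
    (hr : IsUnit (F.submatrix r id).det) (ψ : (Fin n → R) → ℕ) :
    ∑ x : Fin n → R, ψ (fun i => (F.mulVec x + v) (r i)) = ∑ z, ψ z := by
  have hinj : Function.Injective (fun x : Fin n → R => fun i => (F.mulVec x + v) (r i)) := by
    intro x y hxy
    apply Matrix.mulVec_injective_of_isUnit ((Matrix.isUnit_iff_isUnit_det _).2 hr)
    funext i
    have h := congrFun hxy i
    simpa [Matrix.mulVec, dotProduct] using h
  exact (Finite.injective_iff_bijective.1 hinj).sum_comp ψ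

/-- The sum over an affine `n`-dimensional family of a product of at most `n` functions of single
coordinates does not depend on the family, as long as all minors are units. -/
lemma sum_prod_line_eq {R : Type*} [CommRing R] [Fintype R] {m n : ℕ} (hnm : n ≤ m)
    {F G : Matrix (Fin m) (Fin n) R} (hF : MinorsUnit F) (hG : MinorsUnit G)
    (v w : Fin m → R) (g : Fin m → R → ℕ) {e : ℕ} (he : e ≤ n) (k : Fin e → Fin m) :
    ∑ x : Fin n → R, ∏ i, g (k i) ((F.mulVec x + v) (k i)) =
      ∑ x : Fin n → R, ∏ i, g (k i) ((G.mulVec x + w) (k i)) := by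
  classical
  obtain ⟨T, hT, hTc⟩ : ∃ T : Finset (Fin m), univ.image k ⊆ T ∧ T.card = n := by
    apply Finset.exists_superset_card_eq
    · exact (Finset.card_image_le.trans (by simp)).trans he
    · simpa using hnm
  have hs : ∀ i, ∃ s : Fin n, T.orderEmbOfFin hTc s = k i := by
    intro i
    have h : k i ∈ Set.range (T.orderEmbOfFin hTc) := by
      rw [Finset.range_orderEmbOfFin]
      exact hT (mem_image_of_mem _ (mem_univ _))
    exact h
  choose s hs using hs
  have key : ∀ (H : Matrix (Fin m) (Fin n) R) (u : Fin m → R), MinorsUnit H →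
      ∑ x : Fin n → R, ∏ i, g (k i) ((H.mulVec x + u) (k i)) =
        ∑ z : Fin n → R, ∏ i, g (k i) (z (s i)) := by
    intro H u hH
    rw [← sum_comp_rows H u _ (hH _ (T.orderEmbOfFin hTc).strictMono)
      (fun z => ∏ i, g (k i) (z (s i)))]
    simp only [hs]
  rw [key F v hF, key G w hG]

/-- The sum of `d`-th powers, `d ≤ n`, of `1 + ∑ j, g j (y j)` over an affine family
`y = F x + v` with all `n × n` minors of `F` units depends neither on `F` nor on `v`. -/
lemma sum_pow_line_eq {R : Type*} [CommRing R] [Fintype R] {m n : ℕ} (hnm : n ≤ m)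
    {F G : Matrix (Fin m) (Fin n) R} (hF : MinorsUnit F) (hG : MinorsUnit G)
    (v w : Fin m → R) (g : Fin m → R → ℕ) {d : ℕ} (hd : d ≤ n) :
    ∑ x : Fin n → R, (1 + ∑ j, g j ((F.mulVec x + v) j)) ^ d =
      ∑ x : Fin n → R, (1 + ∑ j, g j ((G.mulVec x + w) j)) ^ d := by
  simp only [add_comm 1, add_pow, one_pow, mul_one]
  rw [Finset.sum_comm, Finset.sum_comm (s := univ (α := Fin n → R))]
  refine Finset.sum_congr rfl fun e he => ?_
  rw [← Finset.sum_mul, ← Finset.sum_mul]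
  congr 1
  simp only [Fintype.sum_pow]
  rw [Finset.sum_comm, Finset.sum_comm (s := univ (α := Fin n → R))]
  refine Finset.sum_congr rfl fun k _ => ?_
  exact sum_prod_line_eq hnm hF hG v w g (by have := mem_range.1 he; omega) k

/-! ### Index reversal and block decomposition -/

/-- For digit bijections of type `c j`, reversing the index of `a` is the index of `c - a`. -/
lemma rev_induced {R : Type*} [CommRing R] {q n : ℕ} (hq : 1 ≤ q)
    (c : Fin n → R) (N : Fin n → R ≃ Fin q)
    (hN : ∀ (j : Fin n) (a : R), ((N j a : ℕ) + (N j (-a + c j) : ℕ)) = q - 1)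
    (Nn : (Fin n → R) ≃ Fin (q ^ n))
    (hNn : ∀ a : Fin n → R, (Nn a : ℕ) = ∑ j : Fin n, q ^ (j : ℕ) * (N j (a j) : ℕ))
    (a : Fin n → R) : (Nn a).rev = Nn (-a + c) := by
  have h : (Nn a : ℕ) + Nn (-a + c) = q ^ n - 1 := by
    rw [hNn, hNn, ← Finset.sum_add_distrib]
    simp only [← mul_add, Pi.add_apply, Pi.neg_apply, hN]
    rw [← Finset.sum_mul, Fin.sum_univ_eq_sum_range (fun i => q ^ i)]
    have h1 := geom_sum_mul_add (q - 1) n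
    rw [Nat.sub_add_cancel hq] at h1
    omega
  apply Fin.ext
  rw [Fin.val_rev]
  omega

/-- The blocks of `fromCols3` and `concat3` are matched by splitting `Fin (3 * n)` into three
copies of `Fin n`. -/
lemma fromCols3_mulVec {R : Type*} [CommRing R] {n : ℕ} (A B C : Matrix (Fin (3 * n)) (Fin n) R)
    (a b c : Fin n → R) :
    (fromCols3 A B C).mulVec (concat3 a b c) = A.mulVec a + B.mulVec b + C.mulVec c := by
  funext i
  have h3 : n + n + n = 3 * n := by ring
  simp only [Matrix.mulVec, dotProduct, Pi.add_apply]
  rw [← Equiv.sum_comp (finCongr h3), Fin.sum_univ_add, Fin.sum_univ_add]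
  congr 1
  · congr 1
    · refine Finset.sum_congr rfl fun j _ => ?_
      simp [fromCols3, concat3]
    · refine Finset.sum_congr rfl fun j _ => ?_
      have h2 : (j : ℕ) + n < 2 * n := by omega
      simp [fromCols3, concat3, h2]
  · refine Finset.sum_congr rfl fun j _ => ?_
    have h1 : ¬ n + n + (j : ℕ) < n := by omega
    have h2 : ¬ n + n + (j : ℕ) < 2 * n := by omega
    have h4 : n + n + (j : ℕ) - 2 * n = j := by omega
    simp [fromCols3, concat3, h1, h2, h4]

lemma concat3_inj {R : Type*} {n : ℕ} {a b c a' b' c' : Fin n → R}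
    (h : concat3 a b c = concat3 a' b' c') : a = a' ∧ b = b' ∧ c = c' := by
  refine ⟨funext fun j => ?_, funext fun j => ?_, funext fun j => ?_⟩
  · have := congrFun h ⟨j, by omega⟩
    simpa [concat3] using this
  · have := congrFun h ⟨n + j, by omega⟩
    have h2 : n + (j : ℕ) < 2 * n := by omega
    simpa [concat3, h2] using this
  · have := congrFun h ⟨2 * n + j, by omega⟩
    have h1 : ¬ 2 * n + (j : ℕ) < n := by omega
    simpa [concat3, h1] using this

/-! ### Normality -/

lemma digits_eq {R : Type*} {q m : ℕ} (N' : Fin m → R ≃ Fin q) (y : Fin m → R) :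
    ∑ j : Fin m, q ^ (j : ℕ) * (N' j (y j) : ℕ) =
      (finFunctionFinEquiv fun j => N' j (y j) : ℕ) := by
  rw [finFunctionFinEquiv_apply]
  exact Finset.sum_congr rfl fun j _ => mul_comm _ _

lemma digits_inj {R : Type*} {q m : ℕ} (N' : Fin m → R ≃ Fin q) {y z : Fin m → R}
    (h : ∑ j : Fin m, q ^ (j : ℕ) * (N' j (y j) : ℕ) =
      ∑ j : Fin m, q ^ (j : ℕ) * (N' j (z j) : ℕ)) :
    y = z := by
  rw [digits_eq, digits_eq] at h
  have := finFunctionFinEquiv.injective (Fin.ext h)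
  exact funext fun j => (N' j).injective (congrFun this j)

/-- An injective cube with entries in `{1, …, m³}` is normal, by counting. -/
lemma isNormalCube_of_injective {m : ℕ} {M : Fin m → Fin m → Fin m → ℕ}
    (hinj : Function.Injective (fun p : Fin m × Fin m × Fin m => M p.1 p.2.1 p.2.2))
    (hmem : ∀ i j k, M i j k ∈ Finset.Icc 1 (m ^ 3)) : IsNormalCube M := by
  classical
  refine ⟨hinj, ?_⟩
  have h : univ.image (fun p : Fin m × Fin m × Fin m => M p.1 p.2.1 p.2.2)
      = Finset.Icc 1 (m ^ 3) := by
    apply Finset.eq_of_subset_of_card_le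
    · intro x hx
      obtain ⟨p, -, rfl⟩ := Finset.mem_image.1 hx
      exact hmem _ _ _
    · rw [Finset.card_image_of_injective _ hinj]
      simp only [card_univ, Fintype.card_prod, Fintype.card_fin, Nat.card_Icc]
      apply le_of_eq
      rw [Nat.add_sub_cancel]
      ring
  rw [← Finset.coe_Icc, ← h]
  simp

/-! ### The cube -/

/-- As in Theorem 11, but assuming additionally that all `n × n` minors of `A+B`, `A−B`,
`A+C`, `A−C`, `B+C`, `B−C` are units, the resulting cube `M` is a normal *perfect*
`n`-multimagic cube. -/
theorem perfect_multimagic_cube_of_generator_matrix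
    (R : Type*) [CommRing R] [Fintype R] (q n : ℕ) (hq : Fintype.card R = q) (hn : 1 ≤ n)
    (c : Fin n → R) (N : Fin n → R ≃ Fin q)
    (hN : ∀ (j : Fin n) (a : R), ((N j a : ℕ) + (N j (-a + c j) : ℕ)) = q - 1)
    (c' : Fin (3 * n) → R) (N' : Fin (3 * n) → R ≃ Fin q)
    (hN' : ∀ (j : Fin (3 * n)) (a : R), ((N' j a : ℕ) + (N' j (-a + c' j) : ℕ)) = q - 1)
    (Nn : (Fin n → R) ≃ Fin (q ^ n))
    (hNn : ∀ a : Fin n → R, (Nn a : ℕ) = ∑ j : Fin n, q ^ (j : ℕ) * (N j (a j) : ℕ))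
    (A B C : Matrix (Fin (3 * n)) (Fin n) R)
    (hX : IsUnit (fromCols3 A B C).det)
    (hA : MinorsUnit A) (hB : MinorsUnit B) (hC : MinorsUnit C)
    (hABC : MinorsUnit (A + B + C)) (hABC1 : MinorsUnit (-A + B + C))
    (hABC2 : MinorsUnit (A - B + C)) (hABC3 : MinorsUnit (A + B - C))
    (hAB : MinorsUnit (A + B)) (hAB' : MinorsUnit (A - B))
    (hAC : MinorsUnit (A + C)) (hAC' : MinorsUnit (A - C))
    (hBC : MinorsUnit (B + C)) (hBC' : MinorsUnit (B - C))
    (t : Fin (3 * n) → R)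
    (M : Fin (q ^ n) → Fin (q ^ n) → Fin (q ^ n) → ℕ)
    (hM : ∀ a b c : Fin n → R,
      M (Nn a) (Nn b) (Nn c)
        = 1 + ∑ j : Fin (3 * n),
            q ^ (j : ℕ) * ((N' j) (((fromCols3 A B C).mulVec (concat3 a b c) + t) j) : ℕ)) :
    IsNormalCube M ∧ IsPerfectMultimagicCube n M := by
  have hq1 : 1 ≤ q := hq ▸ Fintype.card_pos
  have hrev := rev_induced hq1 c N hN Nn hNn
  simp only [fromCols3_mulVec] at hM
  refine ⟨isNormalCube_of_injective ?_ ?_, ?_⟩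
  · rintro ⟨i, j, k⟩ ⟨i', j', k'⟩ h
    obtain ⟨a, rfl⟩ := Nn.surjective i
    obtain ⟨b, rfl⟩ := Nn.surjective j
    obtain ⟨e, rfl⟩ := Nn.surjective k
    obtain ⟨a', rfl⟩ := Nn.surjective i'
    obtain ⟨b', rfl⟩ := Nn.surjective j'
    obtain ⟨e', rfl⟩ := Nn.surjective k'
    simp only [hM] at h
    have h1 := add_right_cancel (digits_inj N' (Nat.add_left_cancel h))
    rw [← fromCols3_mulVec, ← fromCols3_mulVec] at h1
    have h2 := Matrix.mulVec_injective_of_isUnit ((Matrix.isUnit_iff_isUnit_det _).2 hX) h1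
    obtain ⟨rfl, rfl, rfl⟩ := concat3_inj h2
    rfl
  · intro i j k
    obtain ⟨a, rfl⟩ := Nn.surjective i
    obtain ⟨b, rfl⟩ := Nn.surjective j
    obtain ⟨e, rfl⟩ := Nn.surjective k
    rw [hM, digits_eq, ← pow_mul, mul_comm n 3, Finset.mem_Icc]
    have := (finFunctionFinEquiv fun j : Fin (3 * n) =>
      N' j ((A.mulVec a + B.mulVec b + C.mulVec e + t) j)).isLt
    omega
  · intro d _ hd
    obtain ⟨S, hline⟩ : ∃ S : ℕ, ∀ (G : Matrix (Fin (3 * n)) (Fin n) R) (w : Fin (3 * n) → R)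
        (L : Fin (q ^ n) → ℕ), MinorsUnit G →
        (∀ x, ∃ y, L (Nn x) = 1 + ∑ j : Fin (3 * n), q ^ (j : ℕ) * (N' j (y j) : ℕ) ∧
          y = G.mulVec x + w) →
        ∑ i, L i ^ d = S := by
      -- Any one line gives the common value; the matrix `A` serves as the reference.
      refine ⟨∑ x : Fin n → R,
        (1 + ∑ j : Fin (3 * n), q ^ (j : ℕ) * (N' j ((A.mulVec x + 0) j) : ℕ)) ^ d,
        fun G w L hG hL => ?_⟩
      have hL' : ∀ x, L (Nn x) =
          1 + ∑ j : Fin (3 * n), q ^ (j : ℕ) * (N' j ((G.mulVec x + w) j) : ℕ) := by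
        intro x
        obtain ⟨y, h, rfl⟩ := hL x
        exact h
      rw [← Nn.sum_comp]
      simp only [hL']
      exact sum_pow_line_eq (by omega) hG hA w 0 (fun j y => q ^ (j : ℕ) * (N' j y : ℕ)) hd
    -- On each line the running index is `Nn x`, a reversed one `Nn (c - x)`, and the argument of
    -- `N'` is `G x + w`; the fixed indices and the vector `c` contribute to `w` only.
    refine ⟨S, ?_, ?_, ?_, ?_, ?_, ?_, ?_, ?_, ?_, ?_, ?_, ?_, ?_⟩
    · refine Nn.forall_congr_right.1 fun b => Nn.forall_congr_right.1 fun e => ?_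
      refine hline A (B.mulVec b + C.mulVec e + t) _ hA fun x => ⟨_, hM _ _ _, ?_⟩
      abel
    · refine Nn.forall_congr_right.1 fun a => Nn.forall_congr_right.1 fun e => ?_
      refine hline B (A.mulVec a + C.mulVec e + t) _ hB fun x => ⟨_, hM _ _ _, ?_⟩
      abel
    · refine Nn.forall_congr_right.1 fun a => Nn.forall_congr_right.1 fun b => ?_
      refine hline C (A.mulVec a + B.mulVec b + t) _ hC fun x => ⟨_, hM _ _ _, ?_⟩
      abel
    · refine hline (A + B + C) t _ hABC fun x => ⟨_, hM _ _ _, ?_⟩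
      simp only [Matrix.add_mulVec]
    · refine hline (A + B - C) (C.mulVec c + t) _ hABC3 fun x => ?_
      simp only [hrev]
      refine ⟨_, hM _ _ _, ?_⟩
      simp only [Matrix.add_mulVec, Matrix.sub_mulVec, Matrix.mulVec_add, Matrix.mulVec_neg]
      abel
    · refine hline (A - B + C) (B.mulVec c + t) _ hABC2 fun x => ?_
      simp only [hrev]
      refine ⟨_, hM _ _ _, ?_⟩
      simp only [Matrix.add_mulVec, Matrix.sub_mulVec, Matrix.mulVec_add, Matrix.mulVec_neg]
      abel
    · refine hline (-A + B + C) (A.mulVec c + t) _ hABC1 fun x => ?_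
      simp only [hrev]
      refine ⟨_, hM _ _ _, ?_⟩
      simp only [Matrix.add_mulVec, Matrix.neg_mulVec, Matrix.mulVec_add, Matrix.mulVec_neg]
      abel
    · refine Nn.forall_congr_right.1 fun a => ?_
      refine hline (B + C) (A.mulVec a + t) _ hBC fun x => ⟨_, hM _ _ _, ?_⟩
      simp only [Matrix.add_mulVec]
      abel
    · refine Nn.forall_congr_right.1 fun a => ?_
      refine hline (B - C) (A.mulVec a + C.mulVec c + t) _ hBC' fun x => ?_
      simp only [hrev]
      refine ⟨_, hM _ _ _, ?_⟩
      simp only [Matrix.sub_mulVec, Matrix.mulVec_add, Matrix.mulVec_neg]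
      abel
    · refine Nn.forall_congr_right.1 fun a => ?_
      refine hline (A + C) (B.mulVec a + t) _ hAC fun x => ⟨_, hM _ _ _, ?_⟩
      simp only [Matrix.add_mulVec]
      abel
    · refine Nn.forall_congr_right.1 fun a => ?_
      refine hline (A - C) (B.mulVec a + C.mulVec c + t) _ hAC' fun x => ?_
      simp only [hrev]
      refine ⟨_, hM _ _ _, ?_⟩
      simp only [Matrix.sub_mulVec, Matrix.mulVec_add, Matrix.mulVec_neg]
      abel
    · refine Nn.forall_congr_right.1 fun a => ?_
      refine hline (A + B) (C.mulVec a + t) _ hAB fun x => ⟨_, hM _ _ _, ?_⟩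
      simp only [Matrix.add_mulVec]
      abel
    · refine Nn.forall_congr_right.1 fun a => ?_
      refine hline (A - B) (C.mulVec a + B.mulVec c + t) _ hAB' fun x => ?_
      simp only [hrev]
      refine ⟨_, hM _ _ _, ?_⟩
      simp only [Matrix.sub_mulVec, Matrix.mulVec_add, Matrix.mulVec_neg]
      abel
end
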